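/- Let T be a generalized star (a tree with exactly one vertex of degree ≥ 3) with at least three legs. Then T is well-failed if and only if T = K_{1,n} for some n ≥ 3 or T = star_{2,2,2}. -/

import Mathlib

variable {V : Type*} [Fintype V] [DecidableEq V]

/-- A fort: nonempty set such that no vertex outside has exactly one neighbor inside. -/
def Fort (G : SimpleGraph V) (W : Set V) : Prop :=
  W.Nonempty ∧ ∀ v ∉ W, ¬ ∃! w, w ∈ W ∧ G.Adj v w

/-- A minimal fort contains no fort as a proper subset. -/
def MinimalFort (G : SimpleGraph V) (W : Set V) : Prop :=
  Fort G W ∧ ∀ W', Fort G W' → W' ⊆ W → W' = W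

/-- The vertices that eventually get colored blue starting from `S`,
under the zero forcing color change rule. -/
inductive Blue (G : SimpleGraph V) (S : Set V) : V → Prop
  | init {v : V} (h : v ∈ S) : Blue G S v
  | force {u v : V} (hadj : G.Adj u v) (hu : Blue G S u)
      (h : ∀ w, G.Adj u w → w ≠ v → Blue G S w) : Blue G S v

/-- A zero forcing set colors every vertex blue. -/
def ZeroForcing (G : SimpleGraph V) (S : Set V) : Prop := ∀ v, Blue G S v

def MinimalZeroForcing (G : SimpleGraph V) (S : Set V) : Prop :=
  ZeroForcing G S ∧ ∀ S', ZeroForcing G S' → S' ⊆ S → S' = S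

/-- A stalled set: a proper subset of the vertex set from which no color change is possible. -/
def Stalled (G : SimpleGraph V) (S : Set V) : Prop :=
  S ≠ Set.univ ∧ ∀ u ∈ S, ¬ ∃! w, w ∉ S ∧ G.Adj u w

def MaximalStalled (G : SimpleGraph V) (S : Set V) : Prop :=
  Stalled G S ∧ ∀ S', Stalled G S' → S ⊆ S' → S' = S

def FailedSet (G : SimpleGraph V) (S : Set V) : Prop := ¬ ZeroForcing G S

def MaximalFailed (G : SimpleGraph V) (S : Set V) : Prop :=
  FailedSet G S ∧ ∀ v ∉ S, ZeroForcing G (insert v S)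


/-- The spider tree `star_{2,2,2}`: the subdivision of `K_{1,3}`, with center `0`
and legs `0-1-2`, `0-3-4`, `0-5-6`. -/
def star222 : SimpleGraph (Fin 7) :=
  SimpleGraph.fromRel (fun i j => (i.val, j.val) ∈ [(0,1), (1,2), (0,3), (3,4), (0,5), (5,6)])

set_option linter.unusedSectionVars false

theorem gs_parent_unique {T : SimpleGraph V} (hT : T.IsTree) (c : V) {u u' v : V}
    (h : T.Adj u v) (h' : T.Adj u' v) (hd : T.dist c v = T.dist c u + 1)
    (hd' : T.dist c v = T.dist c u' + 1) : u = u' := by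
  obtain ⟨p, hp⟩ := hT.connected.exists_walk_length_eq_dist c u
  obtain ⟨q, hq⟩ := hT.connected.exists_walk_length_eq_dist c u'
  have h1 : (p.concat h).IsPath :=
    SimpleGraph.Walk.isPath_of_length_eq_dist _ (by rw [SimpleGraph.Walk.length_concat]; omega)
  have h2 : (q.concat h').IsPath :=
    SimpleGraph.Walk.isPath_of_length_eq_dist _ (by rw [SimpleGraph.Walk.length_concat]; omega)
  have := (hT.existsUnique_path c v).unique h1 h2
  have h3 := congrArg SimpleGraph.Walk.penultimate this
  simpa using h3

theorem gs_parent_exists {T : SimpleGraph V} (hT : T.IsTree) (c : V) {v : V} (hv : v ≠ c) :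
    ∃ u, T.Adj u v ∧ T.dist c v = T.dist c u + 1 := by
  obtain ⟨p, hp⟩ := hT.connected.exists_walk_length_eq_dist v c
  cases p with
  | nil => exact absurd rfl hv
  | @cons _ u _ h p =>
    refine ⟨u, h.symm, ?_⟩
    have h1 := SimpleGraph.dist_le p
    have h2 := hT.dist_eq_dist_add_one_of_adj c h
    rw [SimpleGraph.Walk.length_cons] at hp
    rw [SimpleGraph.dist_comm] at hp h1
    omega

/-- Leg coordinates on a generalized star. -/
structure GSLegs (T : SimpleGraph V) (c : V) (ι : Type*) where
  l : ι → ℕ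
  p : ι → ℕ → V
  zero : ∀ i, p i 0 = c
  pos : ∀ i, 1 ≤ l i
  adj : ∀ i j, j < l i → T.Adj (p i j) (p i (j + 1))
  surj : ∀ v, ∃ i, ∃ j, j ≤ l i ∧ p i j = v
  inj : ∀ i i' j j', j ≤ l i → j' ≤ l i' → p i j = p i' j' → j = j' ∧ (j = 0 ∨ i = i')
  adj_only : ∀ i i' j j', j ≤ l i → j' ≤ l i' → T.Adj (p i j) (p i' j') →
    (j' = j + 1 ∧ (j = 0 ∨ i = i')) ∨ (j = j' + 1 ∧ (j' = 0 ∨ i = i'))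

theorem gs_child_unique {T : SimpleGraph V} (hT : T.IsTree) (c : V)
    (huniq : ∀ w, 3 ≤ (T.neighborSet w).ncard → w = c) {v x y : V} (hv : v ≠ c)
    (hx : T.Adj v x) (hy : T.Adj v y) (hdx : T.dist c x = T.dist c v + 1)
    (hdy : T.dist c y = T.dist c v + 1) : x = y := by
  by_contra hxy
  apply hv
  apply huniq
  obtain ⟨u, hu, hdu⟩ := gs_parent_exists hT c hv
  have hux : u ≠ x := by rintro rfl; omega
  have huy : u ≠ y := by rintro rfl; omega
  have : ({u, x, y} : Set V).ncard = 3 := Set.ncard_eq_three.2 ⟨u, x, y, hux, huy, hxy, rfl⟩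
  rw [← this]
  apply Set.ncard_le_ncard _ (Set.toFinite _)
  rintro z (rfl | rfl | rfl)
  · exact hu.symm
  · exact hx
  · exact hy

theorem gs_legs_exist {T : SimpleGraph V} (hT : T.IsTree) (c : V)
    (hc : 3 ≤ (T.neighborSet c).ncard)
    (huniq : ∀ w, 3 ≤ (T.neighborSet w).ncard → w = c) :
    Nonempty (GSLegs T c (T.neighborSet c)) := by
  classical
  let P : V → V → Prop := fun v w => T.Adj v w ∧ T.dist c w = T.dist c v + 1
  let next : V → V := fun v => if h : ∃ w, P v w then h.choose else v
  have hnext : ∀ v, (∃ w, P v w) → P v (next v) := by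
    intro v h
    simp only [next, dif_pos h]
    exact h.choose_spec
  let p : T.neighborSet c → ℕ → V := fun a j => Nat.rec c (fun n _ => next^[n] a.1) j
  have p0 : ∀ a, p a 0 = c := fun a => rfl
  have p1 : ∀ a, p a 1 = a.1 := fun a => rfl
  have ps : ∀ a j, 1 ≤ j → p a (j + 1) = next (p a j) := by
    intro a j hj
    obtain ⟨n, rfl⟩ : ∃ n, j = n + 1 := ⟨j - 1, by omega⟩
    change next^[n+1] a.1 = next (next^[n] a.1)
    rw [Function.iterate_succ_apply']
  have hbd : ∀ v, T.dist c v < Fintype.card V := by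
    intro v
    obtain ⟨q, hq, hq'⟩ := hT.connected.exists_path_of_dist c v
    rw [← hq']
    exact hq.length_lt
  have hd1 : ∀ a : T.neighborSet c, T.dist c a.1 = 1 := fun a =>
    SimpleGraph.dist_eq_one_iff_adj.2 a.2
  have hdist : ∀ a n, (∀ j, 1 ≤ j → j < n → ∃ w, P (p a j) w) →
      ∀ j, j ≤ n → T.dist c (p a j) = j := by
    intro a n h j
    induction j with
    | zero => intro _; simp [p0]
    | succ j ih =>
      intro hj
      rcases Nat.eq_zero_or_pos j with rfl | hj0
      · simpa [p1] using hd1 a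
      · have := hnext _ (h j hj0 (by omega))
        rw [ps a j hj0, this.2, ih (by omega)]
  have hex : ∀ a, ∃ j, 1 ≤ j ∧ ¬ ∃ w, P (p a j) w := by
    intro a
    by_contra hcon
    push Not at hcon
    have := hdist a (Fintype.card V) (fun j h _ => hcon j h) _ le_rfl
    exact absurd (hbd (p a (Fintype.card V))) (by omega)
  let l : T.neighborSet c → ℕ := fun a =>
    @Nat.find (fun j => 1 ≤ j ∧ ¬ ∃ w, P (p a j) w) (fun _ => Classical.propDecidable _) (hex a)
  have hl : ∀ a, 1 ≤ l a ∧ ¬ ∃ w, P (p a (l a)) w := fun a =>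
    @Nat.find_spec (fun j => 1 ≤ j ∧ ¬ ∃ w, P (p a j) w) (fun _ => Classical.propDecidable _) (hex a)
  have hlt : ∀ a j, 1 ≤ j → j < l a → ∃ w, P (p a j) w := by
    intro a j h1 h2
    have := @Nat.find_min (fun j => 1 ≤ j ∧ ¬ ∃ w, P (p a j) w)
      (fun _ => Classical.propDecidable _) (hex a) j h2
    by_contra hcon
    exact this ⟨h1, hcon⟩
  have hD : ∀ a j, j ≤ l a → T.dist c (p a j) = j := fun a => hdist a (l a) (hlt a)
  have hadj : ∀ a j, j < l a → T.Adj (p a j) (p a (j + 1)) := by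
    intro a j hj
    rcases Nat.eq_zero_or_pos j with rfl | hj0
    · exact a.2
    · rw [ps a j hj0]
      exact (hnext _ (hlt a j hj0 hj)).1
  have hinj : ∀ a a' j, j + 1 ≤ l a → j + 1 ≤ l a' → p a (j + 1) = p a' (j + 1) → a = a' := by
    intro a a' j
    induction j with
    | zero => intro _ _ h; exact Subtype.ext h
    | succ j ih =>
      intro h1 h2 h
      apply ih (by omega) (by omega)
      have e1 := hadj a (j + 1) (by omega)
      have e2 := hadj a' (j + 1) (by omega)
      have d1 := hD a (j + 1) (by omega)
      have d2 := hD a' (j + 1) (by omega)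
      have d3 := hD a (j + 1 + 1) (by omega)
      rw [← h] at e2
      exact gs_parent_unique hT c e1 e2 (by omega) (by omega)
  have hinj' : ∀ i i' j j', j ≤ l i → j' ≤ l i' → p i j = p i' j' → j = j' ∧ (j = 0 ∨ i = i') := by
    intro i i' j j' h h' he
    have d1 := hD i j h
    have d2 := hD i' j' h'
    rw [he] at d1
    have : j = j' := by omega
    subst this
    refine ⟨rfl, ?_⟩
    rcases j with _ | j
    · exact Or.inl rfl
    · exact Or.inr (hinj i i' j h h' he)
  have hao : ∀ i i' j, j ≤ l i → j + 1 ≤ l i' → T.Adj (p i j) (p i' (j + 1)) →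
      (j = 0 ∨ i = i') := by
    intro i i' j h h' ha
    have d1 := hD i j h
    have d2 := hD i' (j + 1) h'
    have d3 := hD i' j (by omega)
    have := gs_parent_unique hT c ha (hadj i' j (by omega)) (by omega) (by omega)
    exact (hinj' i i' j j h (by omega) this).2
  have hne : Nonempty (T.neighborSet c) := by
    have : (T.neighborSet c).Nonempty := Set.nonempty_of_ncard_ne_zero (by omega)
    exact this.to_subtype
  refine ⟨⟨l, p, p0, fun a => (hl a).1, hadj, ?_, hinj', ?_⟩⟩
  · have key : ∀ n v, T.dist c v = n → ∃ i, ∃ j, j ≤ l i ∧ p i j = v := by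
      intro n
      induction n with
      | zero =>
        intro v hv
        have : c = v := (hT.connected.dist_eq_zero_iff).1 hv
        exact ⟨hne.some, 0, by omega, by rw [p0, this]⟩
      | succ n ih =>
        intro v hv
        have hvc : v ≠ c := by rintro rfl; simp at hv
        obtain ⟨u, hu, hdu⟩ := gs_parent_exists hT c hvc
        obtain ⟨i, j, hj, rfl⟩ := ih u (by omega)
        have dj := hD i j hj
        rcases Nat.eq_zero_or_pos j with rfl | hj0
        · exact ⟨⟨v, hu⟩, 1, (hl _).1, rfl⟩
        · have hj' : j < l i := by
            rcases Nat.lt_or_ge j (l i) with h | h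
            · exact h
            · have : j = l i := by omega
              subst this
              exact absurd ⟨v, hu, hdu⟩ (hl i).2
          refine ⟨i, j + 1, hj', ?_⟩
          have d2 := hD i (j + 1) hj'
          refine gs_child_unique hT c huniq (v := p i j) ?_ (hadj i j hj') hu (by omega) hdu
          intro h
          rw [h] at dj
          simp at dj
          omega
    exact fun v => key _ v rfl
  · intro i i' j j' h h' ha
    have d1 := hD i j h
    have d2 := hD i' j' h'
    rcases hT.dist_eq_dist_add_one_of_adj c ha with e | e
    · have : j = j' + 1 := by omega
      subst this
      right
      refine ⟨rfl, ?_⟩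
      rcases hao i' i j' h' h ha.symm with h | h
      · exact Or.inl h
      · exact Or.inr h.symm
    · have : j' = j + 1 := by omega
      subst this
      exact Or.inl ⟨rfl, hao i i' j h h' ha⟩

def gsAdj (v w : Fin 7) : Bool :=
  [(0,1), (1,2), (0,3), (3,4), (0,5), (5,6)].contains (v.val, w.val) ||
  [(0,1), (1,2), (0,3), (3,4), (0,5), (5,6)].contains (w.val, v.val)

theorem gsAdj_iff (v w : Fin 7) : star222.Adj v w ↔ gsAdj v w = true := by
  simp only [star222, SimpleGraph.fromRel_adj]
  revert v w
  decide +kernel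

def gsF : Finset (Finset (Fin 7)) := {{1,2,3,4}, {1,2,5,6}, {3,4,5,6}, {0,2,4,6}}

theorem gs_s222_cover : ∀ W : Finset (Fin 7), W.Nonempty →
    (∀ v, v ∈ W ∨ (W.filter (fun w => gsAdj v w = true)).card ≠ 1) → ∃ F ∈ gsF, F ⊆ W := by
  decide +kernel

theorem gs_s222_fort : ∀ F ∈ gsF, F.card = 4 ∧ F.Nonempty ∧
    (∀ v, v ∈ F ∨ (F.filter (fun w => gsAdj v w = true)).card ≠ 1) := by
  decide +kernel

theorem gs_s222_iff (W : Finset (Fin 7)) : Fort star222 (W : Set (Fin 7)) ↔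
    (W.Nonempty ∧ ∀ v, v ∈ W ∨ (W.filter (fun w => gsAdj v w = true)).card ≠ 1) := by
  unfold Fort
  refine and_congr (by simp) (forall_congr' fun v => ?_)
  rw [Ne, Finset.card_eq_one, or_iff_not_imp_left]
  simp only [Finset.mem_coe, gsAdj_iff, Finset.eq_singleton_iff_unique_mem, Finset.mem_filter,
    ExistsUnique]

theorem gs_s222_card (W : Set (Fin 7)) (hW : MinimalFort star222 W) : W.ncard = 4 := by
  classical
  obtain ⟨W, rfl⟩ : ∃ W' : Finset (Fin 7), (W' : Set (Fin 7)) = W := ⟨W.toFinset, by simp⟩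
  obtain ⟨hf, hmin⟩ := hW
  obtain ⟨hne, hf⟩ := (gs_s222_iff W).1 hf
  obtain ⟨F, hF, hFW⟩ := gs_s222_cover W hne hf
  obtain ⟨hcard, hF'⟩ := gs_s222_fort F hF
  rw [← hmin F ((gs_s222_iff F).2 hF') (by simpa using hFW), Set.ncard_coe_finset, hcard]

theorem gs_fort_iso {V' : Type*} [Fintype V'] [DecidableEq V'] {G : SimpleGraph V} {H : SimpleGraph V'} (e : G ≃g H)
    {W : Set V} (hW : Fort G W) : Fort H (e.symm ⁻¹' W) := by
  obtain ⟨⟨x, hx⟩, hf⟩ := hW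
  refine ⟨⟨e x, by simpa using hx⟩, ?_⟩
  rintro v hv ⟨w, ⟨hw, hvw⟩, hu⟩
  refine hf (e.symm v) hv ⟨e.symm w, ⟨hw, e.symm.map_adj_iff.2 hvw⟩, ?_⟩
  rintro y ⟨hy, hvy⟩
  have := hu (e y) ⟨by simpa using hy, by
    rw [← e.symm.map_adj_iff]; simpa using hvy⟩
  rw [← this]; simp

theorem gs_minimal_iso {V' : Type*} [Fintype V'] [DecidableEq V'] {G : SimpleGraph V} {H : SimpleGraph V'} (e : G ≃g H)
    {W : Set V} (hW : MinimalFort G W) : MinimalFort H (e.symm ⁻¹' W) := by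
  refine ⟨gs_fort_iso e hW.1, ?_⟩
  intro W' hW' hs
  have h1 := gs_fort_iso e.symm hW'
  have h2 := hW.2 _ h1 (by
    intro x hx
    have := hs hx
    simpa using this)
  rw [← h2]
  ext x
  simp

theorem gs_iso_card {G : SimpleGraph V} (e : G ≃g star222)
    {W : Set V} (hW : MinimalFort G W) : W.ncard = 4 := by
  rw [← gs_s222_card _ (gs_minimal_iso e hW)]
  have : (e.symm ⁻¹' W) = e '' W := by
    ext x
    constructor
    · intro h; exact ⟨e.symm x, h, by simp⟩
    · rintro ⟨y, hy, rfl⟩; simpa using hy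
  rw [this, Set.ncard_image_of_injective _ e.injective]

namespace GSLegs

variable {T : SimpleGraph V} {c : V} {ι : Type*}

theorem nbr (L : GSLegs T c ι) {i : ι} {j : ℕ} (hj : j + 1 ≤ L.l i) {w : V}
    (h : T.Adj (L.p i (j + 1)) w) :
    w = L.p i j ∨ (j + 2 ≤ L.l i ∧ w = L.p i (j + 2)) := by
  obtain ⟨i', j', hj', rfl⟩ := L.surj w
  rcases L.adj_only i i' _ j' hj hj' h with ⟨rfl, h2⟩ | ⟨h1, h2⟩
  · rcases h2 with h2 | rfl
    · omega
    · exact Or.inr ⟨hj', rfl⟩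
  · have : j' = j := by omega
    subst this
    left
    rcases h2 with rfl | rfl
    · rw [L.zero, L.zero]
    · rfl

theorem adj0 (L : GSLegs T c ι) (i : ι) : T.Adj c (L.p i 1) := by
  have := L.adj i 0 (L.pos i)
  rwa [L.zero] at this

theorem nbr0 (L : GSLegs T c ι) {w : V} (h : T.Adj c w) : ∃ i, w = L.p i 1 := by
  obtain ⟨i', j', hj', rfl⟩ := L.surj w
  have h' : T.Adj (L.p i' 0) (L.p i' j') := by rwa [L.zero]
  rcases L.adj_only i' i' _ j' (by omega) hj' h' with ⟨rfl, h2⟩ | ⟨h1, h2⟩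
  · exact ⟨i', rfl⟩
  · omega

theorem step (L : GSLegs T c ι) {W : Set V} (hW : Fort T W) {i : ι} {j : ℕ}
    (hj : j + 2 ≤ L.l i) (h : L.p i (j + 1) ∉ W) : L.p i j ∈ W ↔ L.p i (j + 2) ∈ W := by
  have h1 := hW.2 _ h
  have a1 := (L.adj i j (by omega)).symm
  have a2 := L.adj i (j + 1) (by omega)
  constructor
  · intro hin
    by_contra hout
    refine h1 ⟨L.p i j, ⟨hin, a1⟩, ?_⟩
    rintro y ⟨hy, hay⟩
    rcases L.nbr (by omega) hay with rfl | ⟨_, rfl⟩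
    · rfl
    · exact absurd hy hout
  · intro hin
    by_contra hout
    refine h1 ⟨L.p i (j + 2), ⟨hin, a2⟩, ?_⟩
    rintro y ⟨hy, hay⟩
    rcases L.nbr (by omega) hay with rfl | ⟨_, rfl⟩
    · exact absurd hy hout
    · rfl

theorem last (L : GSLegs T c ι) {W : Set V} (hW : Fort T W) {i : ι} {j : ℕ}
    (hj : j + 1 = L.l i) (h : L.p i (j + 1) ∉ W) : L.p i j ∉ W := by
  intro hin
  refine hW.2 _ h ⟨L.p i j, ⟨hin, (L.adj i j (by omega)).symm⟩, ?_⟩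
  rintro y ⟨hy, hay⟩
  rcases L.nbr (by omega) hay with rfl | ⟨h, rfl⟩
  · rfl
  · omega

theorem center (L : GSLegs T c ι) {W : Set V} (hW : Fort T W) (h : c ∉ W) {i : ι}
    (hi : L.p i 1 ∈ W) : ∃ i', i' ≠ i ∧ L.p i' 1 ∈ W := by
  by_contra hcon
  push Not at hcon
  refine hW.2 _ h ⟨L.p i 1, ⟨hi, ?_⟩, ?_⟩
  · have := L.adj i 0 (L.pos i)
    rwa [L.zero] at this
  · rintro y ⟨hy, hay⟩
    obtain ⟨i', rfl⟩ := L.nbr0 hay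
    by_cases hii : i' = i
    · rw [hii]
    · exact absurd hy (hcon i' hii)

theorem all_out (L : GSLegs T c ι) {W : Set V} (hW : Fort T W) {i : ι} {j : ℕ}
    (hj : j + 1 ≤ L.l i) (h1 : L.p i j ∉ W) (h2 : L.p i (j + 1) ∉ W) :
    ∀ n, n ≤ L.l i → L.p i n ∉ W := by
  have down : ∀ j, j + 1 ≤ L.l i → L.p i j ∉ W → L.p i (j + 1) ∉ W →
      L.p i 0 ∉ W ∧ L.p i 1 ∉ W := by
    intro j
    induction j with
    | zero => intro _ a b; exact ⟨a, b⟩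
    | succ j ih =>
      intro h a b
      exact ih (by omega) (fun hin => b ((L.step hW (by omega) a).1 hin)) a
  obtain ⟨a, b⟩ := down j hj h1 h2
  have up : ∀ n, n + 1 ≤ L.l i → L.p i n ∉ W ∧ L.p i (n + 1) ∉ W := by
    intro n
    induction n with
    | zero => intro _; exact ⟨a, b⟩
    | succ n ih =>
      intro h
      obtain ⟨x, y⟩ := ih (by omega)
      exact ⟨y, fun hin => x ((L.step hW (by omega) y).2 hin)⟩
  intro n hn
  rcases n with _ | n
  · exact a
  · exact (up n hn).2

theorem two (L : GSLegs T c ι) {W : Set V} (hW : Fort T W) {i : ι} {k : ℕ} (hk : k ≤ L.l i)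
    (hin : L.p i k ∈ W) {j : ℕ} (hj : j + 1 ≤ L.l i) : L.p i j ∈ W ∨ L.p i (j + 1) ∈ W := by
  by_contra hcon
  push Not at hcon
  exact L.all_out hW hj hcon.1 hcon.2 k hk hin

theorem last_in (L : GSLegs T c ι) {W : Set V} (hW : Fort T W) {i : ι} {k : ℕ} (hk : k ≤ L.l i)
    (hin : L.p i k ∈ W) : L.p i (L.l i) ∈ W := by
  by_contra hcon
  obtain ⟨j, hj⟩ : ∃ j, L.l i = j + 1 := ⟨L.l i - 1, by have := L.pos i; omega⟩
  rw [hj] at hcon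
  have := L.last hW hj.symm hcon
  exact L.all_out hW hj.ge this hcon k hk hin

/-- The vertex set given by a predicate on coordinates. -/
def S (L : GSLegs T c ι) (R : ι → ℕ → Prop) : Set V :=
  {v | ∃ i j, j ≤ L.l i ∧ R i j ∧ L.p i j = v}

theorem mem_S (L : GSLegs T c ι) {R : ι → ℕ → Prop} (hR : ∀ i i', R i 0 → R i' 0) {i : ι} {j : ℕ}
    (hj : j ≤ L.l i) : L.p i j ∈ L.S R ↔ R i j := by
  constructor
  · rintro ⟨i', j', hj', h, he⟩
    obtain ⟨rfl, h2⟩ := L.inj _ _ _ _ hj' hj he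
    rcases h2 with rfl | rfl
    · exact hR _ _ h
    · exact h
  · intro h
    exact ⟨i, j, hj, h, rfl⟩

theorem fort_S (L : GSLegs T c ι) {R : ι → ℕ → Prop} (hR : ∀ i i', R i 0 → R i' 0)
    (hne : ∃ i j, j ≤ L.l i ∧ R i j)
    (hstep : ∀ i j, j + 2 ≤ L.l i → ¬ R i (j + 1) → (R i j ↔ R i (j + 2)))
    (hlast : ∀ i j, j + 1 = L.l i → ¬ R i (j + 1) → ¬ R i j)
    (hcen : ∀ i, ¬ R i 0 → R i 1 → ∃ i', i' ≠ i ∧ R i' 1) : Fort T (L.S R) := by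
  refine ⟨?_, ?_⟩
  · obtain ⟨i, j, hj, h⟩ := hne
    exact ⟨L.p i j, i, j, hj, h, rfl⟩
  · rintro v hv ⟨w, ⟨hw, hvw⟩, hu⟩
    obtain ⟨i, j, hj, rfl⟩ := L.surj v
    rw [L.mem_S hR hj] at hv
    rcases j with _ | j
    · have hvw' := hvw
      rw [L.zero] at hvw'
      obtain ⟨i', rfl⟩ := L.nbr0 hvw'
      rw [L.mem_S hR (L.pos i')] at hw
      obtain ⟨k, hk, hk1⟩ := hcen i' (fun h => hv (hR _ _ h)) hw
      have := hu (L.p k 1) ⟨(L.mem_S hR (L.pos k)).2 hk1, by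
        rw [L.zero]; exact L.adj0 k⟩
      obtain ⟨_, h | h⟩ := L.inj _ _ _ _ (L.pos k) (L.pos i') this
      · omega
      · exact hk h
    · by_cases hjl : j + 1 = L.l i
      · rcases L.nbr hj hvw with rfl | ⟨h, rfl⟩
        · rw [L.mem_S hR (by omega)] at hw
          exact hlast i j hjl hv hw
        · omega
      · have hs := hstep i j (by omega) hv
        rw [← L.mem_S hR (by omega), ← L.mem_S hR (by omega)] at hs
        have hboth : L.p i j ∈ L.S R ∧ L.p i (j + 2) ∈ L.S R := by
          rcases L.nbr hj hvw with rfl | ⟨h, rfl⟩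
          · exact ⟨hw, hs.1 hw⟩
          · exact ⟨hs.2 hw, hw⟩
        have e1 := hu _ ⟨hboth.1, (L.adj i j (by omega)).symm⟩
        have e2 := hu _ ⟨hboth.2, L.adj i (j + 1) (by omega)⟩
        have := (L.inj _ _ _ _ (by omega) (by omega) (e1.trans e2.symm)).1
        omega

/-- Two-leg predicate. -/
def RA (L : GSLegs T c ι) (a b : ι) (i : ι) (j : ℕ) : Prop :=
  (i = a ∨ i = b) ∧ 1 ≤ j ∧ (j = 1 ∨ j % 2 = L.l i % 2)

/-- Central predicate. -/
def RB (L : GSLegs T c ι) (i : ι) (j : ℕ) : Prop := j % 2 = 0 ∨ j = L.l i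

theorem RA0 (L : GSLegs T c ι) (a b : ι) : ∀ i i', L.RA a b i 0 → L.RA a b i' 0 := by
  rintro i i' ⟨_, h, _⟩; omega

theorem RB0 (L : GSLegs T c ι) : ∀ i i', L.RB i 0 → L.RB i' 0 := by
  intro i i' _; left; rfl

theorem fortA (L : GSLegs T c ι) {a b : ι} (hab : a ≠ b) : Fort T (L.S (L.RA a b)) := by
  apply L.fort_S (L.RA0 a b)
  · exact ⟨a, 1, L.pos a, Or.inl rfl, le_rfl, Or.inl rfl⟩
  · intro i j hj h
    by_cases hi : i = a ∨ i = b
    · simp only [RA, hi, true_and] at h ⊢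
      omega
    · simp [RA, hi]
  · intro i j hj h
    by_cases hi : i = a ∨ i = b
    · simp only [RA, hi, true_and] at h ⊢
      omega
    · simp [RA, hi]
  · rintro i _ ⟨rfl | rfl, _⟩
    · exact ⟨b, hab.symm, Or.inr rfl, le_rfl, Or.inl rfl⟩
    · exact ⟨a, hab, Or.inl rfl, le_rfl, Or.inl rfl⟩

theorem minA (L : GSLegs T c ι) {a b : ι} (hab : a ≠ b) :
    MinimalFort T (L.S (L.RA a b)) := by
  refine ⟨L.fortA hab, ?_⟩
  intro W hW hs
  have out : ∀ i j, j ≤ L.l i → ¬ L.RA a b i j → L.p i j ∉ W := fun i j hj h hin =>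
    h ((L.mem_S (L.RA0 a b) hj).1 (hs hin))
  have out0 : ∀ i, L.p i 0 ∉ W := fun i => out i 0 (by omega) (by rintro ⟨_, h, _⟩; omega)
  have leg : ∀ i k, k ≤ L.l i → L.p i k ∈ W → L.p i 1 ∈ W ∧
      ∀ j, j ≤ L.l i → L.RA a b i j → L.p i j ∈ W := by
    intro i k hk hin
    have h1 : L.p i 1 ∈ W := (L.two hW hk hin (j := 0) (L.pos i)).resolve_left (out0 i)
    refine ⟨h1, ?_⟩
    rintro j hj ⟨_, hj1, rfl | hp⟩
    · exact h1
    · by_cases hjl : j = L.l i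
      · rw [hjl]; exact L.last_in hW hk hin
      · refine (L.two hW hk hin (j := j) (by omega)).resolve_right (out _ _ (by omega) ?_)
        rintro ⟨_, _, h | h⟩ <;> omega
  have hone : ∀ i, L.p i 1 ∈ W → i = a ∨ i = b := fun i h =>
    ((L.mem_S (L.RA0 a b) (L.pos i)).1 (hs h)).1
  have hboth : L.p a 1 ∈ W ∧ L.p b 1 ∈ W := by
    obtain ⟨v, hv⟩ := hW.1
    obtain ⟨i, k, hk, rfl⟩ := L.surj v
    have h1 := (leg i k hk hv).1
    obtain ⟨i', hi', h1'⟩ := L.center hW (by rw [← L.zero i]; exact out0 i) h1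
    rcases hone i h1 with rfl | rfl <;> rcases hone i' h1' with rfl | rfl
    · exact absurd rfl hi'
    · exact ⟨h1, h1'⟩
    · exact ⟨h1', h1⟩
    · exact absurd rfl hi'
  apply Set.Subset.antisymm hs
  rintro v ⟨i, j, hj, hr, rfl⟩
  rcases hr.1 with h | h
  · subst h; exact (leg i 1 (L.pos i) hboth.1).2 j hj hr
  · subst h; exact (leg i 1 (L.pos i) hboth.2).2 j hj hr

theorem minB (L : GSLegs T c ι) [Nonempty ι] (h2 : ∀ i, 2 ≤ L.l i) :
    MinimalFort T (L.S L.RB) := by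
  refine ⟨?_, ?_⟩
  · apply L.fort_S L.RB0
    · exact ⟨Classical.arbitrary ι, 0, by omega, Or.inl rfl⟩
    · intro i j hj h
      simp only [RB] at h ⊢
      omega
    · intro i j hj h
      simp only [RB] at h ⊢
      omega
    · intro i h _
      exact absurd (Or.inl rfl) h
  · intro W hW hs
    have out : ∀ i j, j ≤ L.l i → ¬ L.RB i j → L.p i j ∉ W := fun i j hj h hin =>
      h ((L.mem_S L.RB0 hj).1 (hs hin))
    have out1 : ∀ i, L.p i 1 ∉ W := fun i => out i 1 (L.pos i) (by
      have := h2 i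
      rintro (h | h) <;> omega)
    have hc : c ∈ W := by
      by_contra hc
      obtain ⟨v, hv⟩ := hW.1
      obtain ⟨i, k, hk, rfl⟩ := L.surj v
      exact L.all_out hW (j := 0) (L.pos i) (by rwa [L.zero]) (out1 i) k hk hv
    apply Set.Subset.antisymm hs
    rintro v ⟨i, j, hj, hr, rfl⟩
    have h0 : L.p i 0 ∈ W := by rwa [L.zero]
    by_cases hjl : j = L.l i
    · rw [hjl]; exact L.last_in hW (Nat.zero_le _) h0
    · have hp : j % 2 = 0 := hr.resolve_right hjl
      rcases j with _ | j
      · exact h0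
      · refine (L.two hW (Nat.zero_le _) h0 (j := j) hj).resolve_left (out _ _ (by omega) ?_)
        rintro (h | h) <;> omega

open Classical in
theorem card_D [Fintype ι] (L : GSLegs T c ι) (R : ι → ℕ → Prop) :
    {v | ∃ i j, (1 ≤ j ∧ j ≤ L.l i) ∧ R i j ∧ L.p i j = v}.ncard =
      ∑ i, ((Finset.Icc 1 (L.l i)).filter (R i)).card := by
  rw [← Finset.card_sigma]
  have : {v | ∃ i j, (1 ≤ j ∧ j ≤ L.l i) ∧ R i j ∧ L.p i j = v} =
      (((Finset.univ.sigma fun i => (Finset.Icc 1 (L.l i)).filter (R i)).image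
        (fun x => L.p x.1 x.2) : Finset V) : Set V) := by
    ext v
    simp [and_assoc]
  rw [this, Set.ncard_coe_finset, Finset.card_image_of_injOn]
  rintro ⟨i, j⟩ h ⟨i', j'⟩ h' he
  simp only [Finset.coe_sigma, Set.mem_sigma_iff, Finset.mem_coe, Finset.mem_filter,
    Finset.mem_Icc] at h h'
  obtain ⟨e1, e2⟩ := L.inj _ _ _ _ h.2.1.2 h'.2.1.2 he
  have : i = i' := by
    rcases e2 with e2 | e2
    · omega
    · exact e2
  subst this
  subst e1
  rfl

theorem countA (l : ℕ) (hl : 1 ≤ l) :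
    ((Finset.Icc 1 l).filter (fun j => j = 1 ∨ j % 2 = l % 2)).card = l / 2 + 1 := by
  have : (Finset.Icc 1 l).filter (fun j => j = 1 ∨ j % 2 = l % 2) =
      (Finset.range (l / 2 + 1)).image (fun t => if t = 0 then 1 else 2 * t + l % 2) := by
    ext j
    simp only [Finset.mem_filter, Finset.mem_Icc, Finset.mem_image, Finset.mem_range]
    constructor
    · rintro ⟨h, h'⟩
      by_cases h1 : j = 1
      · exact ⟨0, by omega, by simp [h1]⟩
      · refine ⟨(j - l % 2) / 2, by omega, ?_⟩
        rw [if_neg (by omega)]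
        omega
    · rintro ⟨t, ht, rfl⟩
      split_ifs <;> omega
  rw [this, Finset.card_image_of_injOn, Finset.card_range]
  intro x hx y hy h
  simp only at h
  split_ifs at h <;> omega

theorem countB (l : ℕ) :
    ((Finset.Icc 1 l).filter (fun j => j % 2 = 0 ∨ j = l)).card = (l + 1) / 2 := by
  have : (Finset.Icc 1 l).filter (fun j => j % 2 = 0 ∨ j = l) =
      (Finset.range ((l + 1) / 2)).image (fun t => min (2 * t + 2) l) := by
    ext j
    simp only [Finset.mem_filter, Finset.mem_Icc, Finset.mem_image, Finset.mem_range]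
    constructor
    · rintro ⟨h, h'⟩
      exact ⟨(j - 1) / 2, by omega, by omega⟩
    · rintro ⟨t, ht, rfl⟩
      omega
  rw [this, Finset.card_image_of_injOn, Finset.card_range]
  intro x hx y hy h
  simp only [Finset.coe_range, Set.mem_Iio] at hx hy h
  omega

theorem cardA [Fintype ι] (L : GSLegs T c ι) {a b : ι} (hab : a ≠ b) :
    (L.S (L.RA a b)).ncard = L.l a / 2 + L.l b / 2 + 2 := by
  classical
  have : L.S (L.RA a b) = {v | ∃ i j, (1 ≤ j ∧ j ≤ L.l i) ∧ L.RA a b i j ∧ L.p i j = v} := by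
    ext v
    constructor
    · rintro ⟨i, j, hj, hr, rfl⟩
      exact ⟨i, j, ⟨hr.2.1, hj⟩, hr, rfl⟩
    · rintro ⟨i, j, hj, hr, rfl⟩
      exact ⟨i, j, hj.2, hr, rfl⟩
  rw [this, L.card_D, Fintype.sum_eq_add a b hab]
  · have key : ∀ i, (i = a ∨ i = b) →
        ((Finset.Icc 1 (L.l i)).filter (L.RA a b i)).card = L.l i / 2 + 1 := by
      intro i hi
      rw [← countA _ (L.pos i)]
      congr 1
      ext j
      simp only [Finset.mem_filter, Finset.mem_Icc, RA, hi, true_and]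
      omega
    rw [key a (Or.inl rfl), key b (Or.inr rfl)]
    omega
  · rintro i ⟨h1, h2⟩
    simp [RA, h1, h2]

theorem cardB [Fintype ι] [Nonempty ι] (L : GSLegs T c ι) :
    (L.S L.RB).ncard = ∑ i, (L.l i + 1) / 2 + 1 := by
  classical
  have : L.S L.RB =
      insert c {v | ∃ i j, (1 ≤ j ∧ j ≤ L.l i) ∧ L.RB i j ∧ L.p i j = v} := by
    ext v
    constructor
    · rintro ⟨i, j, hj, hr, rfl⟩
      rcases j with _ | j
      · left; exact L.zero i
      · right; exact ⟨i, j + 1, ⟨by omega, hj⟩, hr, rfl⟩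
    · rintro (rfl | ⟨i, j, hj, hr, rfl⟩)
      · exact ⟨Classical.arbitrary ι, 0, by omega, Or.inl rfl, L.zero _⟩
      · exact ⟨i, j, hj.2, hr, rfl⟩
  rw [this, Set.ncard_insert_of_notMem _ (Set.toFinite _), L.card_D]
  · congr 1
    apply Finset.sum_congr rfl
    intro i _
    rw [← countB]
    congr 1
    ext j
    simp only [Finset.mem_filter, RB]
  · rintro ⟨i, j, hj, hr, h⟩
    have := (L.inj i i _ 0 hj.2 (by omega) (h.trans (L.zero i).symm)).1
    omega

theorem star_card [Fintype ι] (L : GSLegs T c ι) (h3 : 3 ≤ Fintype.card ι)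
    (h1 : ∀ i, L.l i = 1) {W : Set V} (hW : MinimalFort T W) : W.ncard = 2 := by
  have : ∃ a b, a ≠ b ∧ L.p a 1 ∈ W ∧ L.p b 1 ∈ W := by
    by_cases hc : c ∈ W
    · obtain ⟨a, b, hab⟩ := Fintype.exists_pair_of_one_lt_card (α := ι) (by omega)
      have h : ∀ i, L.p i 1 ∈ W := by
        intro i
        rw [← h1 i]
        exact L.last_in hW.1 (Nat.zero_le _) (by rwa [L.zero])
      exact ⟨a, b, hab, h a, h b⟩
    · obtain ⟨v, hv⟩ := hW.1.1
      obtain ⟨i, j, hj, rfl⟩ := L.surj v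
      have : j ≠ 0 := by rintro rfl; rw [L.zero] at hv; exact hc hv
      have hj1 : j = 1 := by have := h1 i; omega
      subst hj1
      obtain ⟨i', h, h'⟩ := L.center hW.1 hc hv
      exact ⟨i', i, h, h', hv⟩
  obtain ⟨a, b, hab, ha, hb⟩ := this
  rw [← hW.2 _ (L.fortA hab) ?_, L.cardA hab, h1, h1]
  rintro v ⟨i, j, hj, ⟨hi, hj1, _⟩, rfl⟩
  have : j = 1 := by have := h1 i; omega
  subst this
  rcases hi with rfl | rfl
  · exact ha
  · exact hb

theorem nonempty_iso (L : GSLegs T c (Fin 3)) (h2 : ∀ i, L.l i = 2) :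
    Nonempty (T ≃g star222) := by
  let I : Fin 7 → Fin 3 := ![0, 0, 0, 1, 1, 2, 2]
  let J : Fin 7 → ℕ := ![0, 1, 2, 1, 2, 1, 2]
  have hJ : ∀ x, J x ≤ 2 := by decide
  have hJ' : ∀ x, J x ≤ L.l (I x) := fun x => by rw [h2]; exact hJ x
  let g : Fin 7 → V := fun x => L.p (I x) (J x)
  have ginj : Function.Injective g := by
    intro x y h
    obtain ⟨h1, h2⟩ := L.inj _ _ _ _ (hJ' x) (hJ' y) h
    clear h
    revert x y
    decide
  have gsurj : Function.Surjective g := by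
    intro v
    obtain ⟨i, j, hj, rfl⟩ := L.surj v
    have : ∀ i : Fin 3, ∀ j : Fin 3, ∃ x, J x = j.val ∧ (j.val = 0 ∨ I x = i) := by decide
    rw [h2] at hj
    obtain ⟨x, hx1, hx2⟩ := this i ⟨j, by omega⟩
    refine ⟨x, ?_⟩
    simp only [g]
    simp only at hx1 hx2
    rw [hx1]
    rcases hx2 with rfl | rfl
    · rw [L.zero, L.zero]
    · rfl
  have gadj : ∀ x y, T.Adj (g x) (g y) ↔ star222.Adj x y := by
    have up : ∀ x y, J y = J x + 1 → (J x = 0 ∨ I x = I y) → T.Adj (g x) (g y) := by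
      intro x y h h'
      have := L.adj (I y) (J x) (by rw [h2]; have := hJ y; omega)
      simp only [g]
      rw [h]
      rcases h' with h' | h'
      · rw [h', L.zero]
        exact L.adj0 _
      · rw [h']; exact this
    intro x y
    have key : ∀ x y, gsAdj x y = true ↔ ((J y = J x + 1 ∧ (J x = 0 ∨ I x = I y)) ∨
      (J x = J y + 1 ∧ (J y = 0 ∨ I x = I y))) := by decide
    rw [gsAdj_iff, key]
    constructor
    · intro h
      exact L.adj_only _ _ _ _ (hJ' x) (hJ' y) h
    · rintro (⟨h, h'⟩ | ⟨h, h'⟩)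
      · exact up x y h h'
      · exact (up y x h (h'.imp id Eq.symm)).symm
  exact ⟨(RelIso.symm ⟨Equiv.ofBijective g ⟨ginj, gsurj⟩, by intro a b; exact gadj a b⟩)⟩

/-- Relabel the legs. -/
def relabel {κ : Type*} (L : GSLegs T c ι) (e : κ ≃ ι) : GSLegs T c κ where
  l := fun k => L.l (e k)
  p := fun k => L.p (e k)
  zero := fun k => L.zero _
  pos := fun k => L.pos _
  adj := fun k => L.adj _
  surj := fun v => by
    obtain ⟨i, j, hj, h⟩ := L.surj v
    exact ⟨e.symm i, j, by simpa using hj, by simpa using h⟩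
  inj := fun i i' j j' h h' he => by simpa using L.inj _ _ _ _ h h' he
  adj_only := fun i i' j j' h h' he => by simpa using L.adj_only _ _ _ _ h h' he

end GSLegs

theorem generalizedStar_wellFailed_iff (T : SimpleGraph V) (hT : T.IsTree) (c : V)
    (hc : 3 ≤ (T.neighborSet c).ncard)
    (huniq : ∀ w, 3 ≤ (T.neighborSet w).ncard → w = c) :
    (∀ W W' : Set V, MinimalFort T W → MinimalFort T W' → W.ncard = W'.ncard) ↔
      ((∀ w, w ≠ c → (T.neighborSet w).ncard = 1) ∨ Nonempty (T ≃g star222)) := by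
  classical
  obtain ⟨L⟩ := gs_legs_exist hT c hc huniq
  have h3 : 3 ≤ Fintype.card (T.neighborSet c) := by
    rwa [← Nat.card_eq_fintype_card, Nat.card_coe_set_eq]
  have hne : Nonempty (T.neighborSet c) := Fintype.card_pos_iff.1 (by omega)
  constructor
  · intro h
    have hq : ∀ a b, L.l a / 2 = L.l b / 2 := by
      intro a b
      by_cases hab : a = b
      · rw [hab]
      obtain ⟨d, hd⟩ : ∃ d, d ∉ ({a, b} : Finset (T.neighborSet c)) := by
        by_contra hcon
        push Not at hcon
        have h4 : (Finset.univ : Finset (T.neighborSet c)) ⊆ {a, b} := fun x _ => hcon x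
        have h5 := Finset.card_le_card h4
        have h6 := Finset.card_le_two (a := a) (b := b)
        rw [Finset.card_univ] at h5
        omega
      simp only [Finset.mem_insert, Finset.mem_singleton, not_or] at hd
      have := h _ _ (L.minA hd.1) (L.minA hd.2)
      rw [L.cardA hd.1, L.cardA hd.2] at this
      omega
    obtain ⟨a, b, hab⟩ := Fintype.exists_pair_of_one_lt_card (α := T.neighborSet c) (by omega)
    by_cases h0 : L.l a / 2 = 0
    · left
      have h1 : ∀ i, L.l i = 1 := by
        intro i
        have := hq a i
        have := L.pos i
        omega
      intro w hw
      obtain ⟨i, j, hj, rfl⟩ := L.surj w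
      have : j ≠ 0 := by rintro rfl; exact hw (L.zero i)
      have hj1 : j = 0 + 1 := by have := h1 i; omega
      subst hj1
      rw [Set.ncard_eq_one]
      refine ⟨L.p i 0, ?_⟩
      ext y
      simp only [SimpleGraph.mem_neighborSet, Set.mem_singleton_iff]
      constructor
      · intro hy
        rcases L.nbr hj hy with h | ⟨h, _⟩
        · exact h
        · have := h1 i; omega
      · rintro rfl
        exact (L.adj i 0 (L.pos i)).symm
    · right
      have hB := h _ _ (L.minA hab) (L.minB (fun i => by have := hq a i; omega))
      rw [L.cardA hab, L.cardB, hq b a] at hB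
      have hlow : Fintype.card (T.neighborSet c) * (L.l a / 2) ≤ ∑ i, (L.l i + 1) / 2 := by
        have := Finset.card_nsmul_le_sum Finset.univ (fun i => (L.l i + 1) / 2) (L.l a / 2)
          (fun i _ => by have := hq a i; omega)
        simpa using this
      have hq1 : L.l a / 2 = 1 := by
        have := Nat.mul_le_mul_right (L.l a / 2) h3
        omega
      rw [hq1] at hlow hB
      have hc3 : Fintype.card (T.neighborSet c) = 3 := by omega
      have hl2 : ∀ i, L.l i = 2 := by
        have hge : ∀ i ∈ (Finset.univ : Finset (T.neighborSet c)), 1 ≤ (L.l i + 1) / 2 := by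
          intro i _
          have := L.pos i
          omega
        have := (Finset.sum_eq_sum_iff_of_le hge).1 (by
          rw [Finset.sum_const, Finset.card_univ, hc3]
          simp only [smul_eq_mul]
          omega)
        intro i
        have h7 := this i (Finset.mem_univ i)
        have := hq a i
        omega
      let e := (Fintype.equivFinOfCardEq hc3).symm
      exact (L.relabel e).nonempty_iso (fun i => hl2 _)
  · rintro (h | he)
    · have h1 : ∀ i, L.l i = 1 := by
        intro i
        by_contra hcon
        have hp := L.pos i
        have hne1 : L.p i 1 ≠ c := by
          intro h
          have := (L.inj i i 1 0 hp (by omega) (h.trans (L.zero i).symm)).1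
          omega
        obtain ⟨y, hy⟩ := Set.ncard_eq_one.1 (h _ hne1)
        have e0 : L.p i 0 ∈ T.neighborSet (L.p i 1) := (L.adj i 0 hp).symm
        have e2 : L.p i 2 ∈ T.neighborSet (L.p i 1) := L.adj i 1 (by omega)
        rw [hy] at e0 e2
        have := (L.inj i i 0 2 (by omega) (by omega) (e0.trans e2.symm)).1
        omega
      intro W W' hW hW'
      rw [L.star_card h3 h1 hW, L.star_card h3 h1 hW']
    · obtain ⟨e⟩ := he
      intro W W' hW hW'
      rw [gs_iso_card e hW, gs_iso_card e hW']
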